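/- Let u ≤ w in S_n and let I and I' be maximal ascents in E_w(u)^+. Then (I,I') = ∅ or (I',I) = ∅. -/

import Mathlib

open Equiv

/-- The length (number of inversions) of a permutation of `Fin n`. -/
def invLen {n : ℕ} (u : Equiv.Perm (Fin n)) : ℕ :=
  (Finset.univ.filter (fun p : Fin n × Fin n => p.1 < p.2 ∧ u p.2 < u p.1)).card

/-- A permutation is a transposition if it swaps two distinct elements. -/
def IsTransposition {n : ℕ} (σ : Equiv.Perm (Fin n)) : Prop :=
  ∃ a b : Fin n, a ≠ b ∧ σ = Equiv.swap a b

/-- Bruhat order on permutations: `v ≤ w` iff `w` is obtained from `v` by left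
multiplication by transpositions, each strictly increasing the length. -/
def BruhatLE {n : ℕ} (v w : Equiv.Perm (Fin n)) : Prop :=
  ∃ (m : ℕ) (c : ℕ → Equiv.Perm (Fin n)),
    c 0 = v ∧ c m = w ∧
    ∀ k, k < m →
      (∃ τ : Equiv.Perm (Fin n), IsTransposition τ ∧ c (k + 1) = τ * c k) ∧
      invLen (c k) < invLen (c (k + 1))

/-- The edge set `Ẽ_w(u)`. -/
def Etilde {n : ℕ} (w u : Equiv.Perm (Fin n)) : Set (Fin n × Fin n) :=
  { p | ∃ i j : Fin n, i < j ∧ p = (u i, u j) ∧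
      BruhatLE (Equiv.swap (u i) (u j) * u) w ∧
      |(invLen (Equiv.swap (u i) (u j) * u) : ℤ) - (invLen u : ℤ)| = 1 }

/-- The transitive reduction `E_w(u)` of `Ẽ_w(u)`: edges `(a,b)` of `Ẽ_w(u)` such that
there is no directed path from `a` to `b` in `Ẽ_w(u)` using at least two edges. -/
def Ered {n : ℕ} (w u : Equiv.Perm (Fin n)) : Set (Fin n × Fin n) :=
  { p | p ∈ Etilde w u ∧
      ¬ ∃ c : Fin n, (p.1, c) ∈ Etilde w u ∧
        Relation.TransGen (fun a b : Fin n => (a, b) ∈ Etilde w u) c p.2 }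

/-- `E_w(u)^+`: edges `(a,b)` of `E_w(u)` with `a < b`. -/
def Eplus {n : ℕ} (w u : Equiv.Perm (Fin n)) : Set (Fin n × Fin n) :=
  { p ∈ Ered w u | p.1 < p.2 }

/-- `E_w(u)^-`: edges `(a,b)` of `E_w(u)` with `a > b`. -/
def Eminus {n : ℕ} (w u : Equiv.Perm (Fin n)) : Set (Fin n × Fin n) :=
  { p ∈ Ered w u | p.2 < p.1 }

/-- The moment-map image `μ(u) = (u⁻¹(1), …, u⁻¹(n)) ∈ ℝⁿ`
(using values `1, …, n`, i.e. `Fin.val + 1`). -/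
def mu {n : ℕ} (u : Equiv.Perm (Fin n)) : Fin n → ℝ :=
  fun k => ((u⁻¹ k : ℕ) : ℝ) + 1

/-- The standard basis vector `e_a` of `ℝⁿ`. -/
def stdB {n : ℕ} (a : Fin n) : Fin n → ℝ :=
  fun k => if k = a then 1 else 0

/-- The involution on ordered pairs induced by `swap i j`. -/
def phiPair {n : ℕ} (i j : Fin n) (p : Fin n × Fin n) : Fin n × Fin n :=
  if swap i j p.1 < swap i j p.2 then (swap i j p.1, swap i j p.2) else p

lemma phiPair_inj {n : ℕ} (i j : Fin n) (p q : Fin n × Fin n) (hp : p.1 < p.2) (hq : q.1 < q.2)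
    (h : phiPair i j p = phiPair i j q) : p = q := by
  have key : ∀ p : Fin n × Fin n, p.1 < p.2 → phiPair i j (phiPair i j p) = p := by
    intro p hp
    unfold phiPair
    by_cases h1 : swap i j p.1 < swap i j p.2
    · simp [h1, hp]
    · simp [h1]
  rw [← key p hp, ← key q hq, h]

lemma len_lt {n : ℕ} (u v : Perm (Fin n)) (i j : Fin n) (hij : i < j) (hu : u i < u j)
    (hv : v = u * swap i j) : invLen u + 1 ≤ invLen v := by
  classical
  unfold invLen
  have hs : (i, j) ∉ Finset.univ.filter
      (fun p : Fin n × Fin n => p.1 < p.2 ∧ u p.2 < u p.1) := by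
    simp [hu.le]
  rw [← Finset.card_insert_of_notMem hs]
  apply Finset.card_le_card_of_injOn (phiPair i j)
  · rintro ⟨a, b⟩ hab
    simp only [Finset.coe_insert, Finset.coe_filter, Finset.mem_univ, true_and,
      Set.mem_insert_iff, Set.mem_setOf_eq, Prod.mk.injEq] at hab
    simp only [Finset.coe_filter, Finset.mem_univ, true_and, Set.mem_setOf_eq, phiPair]
    subst hv
    simp only [Perm.mul_apply]
    split_ifs with h
    · simp only [swap_apply_self]
      refine ⟨h, ?_⟩
      rcases hab with ⟨rfl, rfl⟩ | hab
      · simp at h; exact absurd h (not_lt.2 hij.le)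
      · exact hab.2
    · simp only
      grind [swap_apply_def]
  · rintro p hp q hq h
    have aux : ∀ p : Fin n × Fin n, p ∈ (↑(insert (i, j) (Finset.univ.filter
        (fun p : Fin n × Fin n => p.1 < p.2 ∧ u p.2 < u p.1))) : Set (Fin n × Fin n)) →
        p.1 < p.2 := by
      intro p hp
      simp at hp
      rcases hp with rfl | hp
      · exact hij
      · exact hp.1
    exact phiPair_inj i j p q (aux p hp) (aux q hq) h

lemma len_le {n : ℕ} (u v : Perm (Fin n)) (i j : Fin n) (hij : i < j) (hu : u i < u j)
    (hv : v = u * swap i j) (hno : ∀ k, i < k → k < j → u i < u k → ¬ u k < u j) :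
    invLen v ≤ invLen u + 1 := by
  classical
  unfold invLen
  have hs : (i, j) ∉ Finset.univ.filter
      (fun p : Fin n × Fin n => p.1 < p.2 ∧ u p.2 < u p.1) := by
    simp [hu.le]
  rw [← Finset.card_insert_of_notMem hs]
  apply Finset.card_le_card_of_injOn (phiPair i j)
  · rintro ⟨a, b⟩ hab
    simp only [Finset.coe_filter, Finset.mem_univ, true_and, Set.mem_setOf_eq] at hab
    simp only [Finset.coe_insert, Finset.coe_filter, Finset.mem_univ, true_and,
      Set.mem_insert_iff, Set.mem_setOf_eq, phiPair]
    subst hv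
    simp only [Perm.mul_apply] at hab
    split_ifs with h
    · right
      exact ⟨h, hab.2⟩
    · simp only [Prod.mk.injEq]
      have hinj := u.injective
      obtain ⟨h1, h2⟩ := hab
      by_cases hai : a = i
      · subst hai
        by_cases hbj : b = j
        · left; exact ⟨rfl, hbj⟩
        · right
          have hba : b ≠ a := h1.ne'
          rw [swap_apply_left, swap_apply_of_ne_of_ne hba hbj] at h h2
          have h3 : b < j := lt_of_le_of_ne (not_lt.1 h) hbj
          refine ⟨h1, lt_of_le_of_ne ?_ (fun e => hba (hinj e))⟩
          by_contra hc
          exact hno b h1 h3 (not_le.1 hc) h2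
      · right
        refine ⟨h1, ?_⟩
        by_cases hbj : b = j
        · subst hbj
          have hab : a ≠ b := h1.ne
          rw [swap_apply_right, swap_apply_of_ne_of_ne hai hab] at h h2
          have h3 : i < a := lt_of_le_of_ne (not_lt.1 h) (Ne.symm hai)
          refine lt_of_le_of_ne ?_ (fun e => hab (hinj e).symm)
          by_contra hc
          exact hno a h3 h1 h2 (not_le.1 hc)
        · exfalso
          grind [swap_apply_def]
  · rintro p hp q hq h
    simp at hp hq
    exact phiPair_inj i j p q hp.1 hq.1 h

lemma cover_empty {n : ℕ} (u : Perm (Fin n)) (i j : Fin n) (hij : i < j) (hu : u i < u j)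
    (h : |(invLen (swap (u i) (u j) * u) : ℤ) - (invLen u : ℤ)| = 1)
    (k : Fin n) (h1 : i < k) (h2 : k < j) (h3 : u i < u k) (h4 : u k < u j) : False := by
  have ik := h1.ne
  have kj := h2.ne
  have ij := hij.ne
  have e1 := len_lt u _ i k h1 h3 rfl
  have e2 := len_lt (u * swap i k) _ k j h2 (by
    simp only [Perm.mul_apply]
    rw [swap_apply_right, swap_apply_of_ne_of_ne ij.symm kj.symm]; exact hu) rfl
  have e3 := len_lt (u * swap i k * swap k j) _ i k h1 (by
    simp only [Perm.mul_apply]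
    rw [swap_apply_left, swap_apply_of_ne_of_ne ik ij, swap_apply_left,
      swap_apply_of_ne_of_ne ij.symm kj.symm]; exact h4) rfl
  have e : u * swap i k * swap k j * swap i k = swap (u i) (u j) * u := by
    ext x
    simp only [Perm.mul_apply]
    have hinj := u.injective
    by_cases hxi : x = i
    · subst hxi
      rw [swap_apply_left, swap_apply_left, swap_apply_of_ne_of_ne ij.symm kj.symm,
        swap_apply_left]
    by_cases hxk : x = k
    · subst hxk
      rw [swap_apply_right, swap_apply_of_ne_of_ne ik ij, swap_apply_left,
        swap_apply_of_ne_of_ne h3.ne' h4.ne]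
    by_cases hxj : x = j
    · subst hxj
      rw [swap_apply_of_ne_of_ne hxi hxk, swap_apply_right, swap_apply_right, swap_apply_right]
    · rw [swap_apply_of_ne_of_ne hxi hxk, swap_apply_of_ne_of_ne hxk hxj,
        swap_apply_of_ne_of_ne hxi hxk,
        swap_apply_of_ne_of_ne (fun e => hxi (hinj e)) (fun e => hxj (hinj e))]
  rw [e] at e3
  rw [abs_eq one_pos.le] at h
  omega

lemma bruhat_cons {n : ℕ} (v u w : Perm (Fin n)) (hle : BruhatLE u w)
    (τ : Perm (Fin n)) (hτ : IsTransposition τ) (h : u = τ * v) (hl : invLen v < invLen u) :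
    BruhatLE v w := by
  obtain ⟨m, c, h0, hm, hc⟩ := hle
  refine ⟨m + 1, fun k => Nat.casesOn k v c, rfl, hm, ?_⟩
  intro k hk
  cases k with
  | zero =>
    refine ⟨⟨τ, hτ, ?_⟩, ?_⟩
    · simpa [h0] using h
    · simpa [h0] using hl
  | succ k => exact hc k (by omega)

lemma down_edge {n : ℕ} (w u : Perm (Fin n)) (hle : BruhatLE u w) (i j : Fin n) (hij : i < j)
    (hu : u j < u i) (hno : ∀ k, i < k → k < j → u j < u k → ¬ u k < u i) :
    (u i, u j) ∈ Etilde w u := by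
  have hsw : swap (u i) (u j) * u = u * swap i j := by
    rw [Equiv.mul_swap_eq_swap_mul]
  have ee : u = (swap (u i) (u j) * u) * swap i j := by
    rw [hsw, mul_assoc, swap_mul_self, mul_one]
  have vi : (swap (u i) (u j) * u) i = u j := by simp
  have vj : (swap (u i) (u j) * u) j = u i := by simp
  have h1 := len_lt (swap (u i) (u j) * u) u i j hij (by rw [vi, vj]; exact hu) ee
  have h2 := len_le (swap (u i) (u j) * u) u i j hij (by rw [vi, vj]; exact hu) ee (by
    intro k hk1 hk2
    have : (swap (u i) (u j) * u) k = u k := by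
      simp only [Perm.mul_apply]
      exact swap_apply_of_ne_of_ne (fun e => hk1.ne' (u.injective e))
        (fun e => hk2.ne (u.injective e))
    rw [vi, vj, this]
    exact hno k hk1 hk2)
  refine ⟨i, j, hij, rfl, ?_, ?_⟩
  · refine bruhat_cons _ u w hle (swap (u i) (u j)) ⟨u i, u j, hu.ne', rfl⟩ ?_ (by omega)
    rw [← mul_assoc, swap_mul_self, one_mul]
  · rw [abs_eq one_pos.le]
    omega

lemma down_path {n : ℕ} (w u : Perm (Fin n)) (hle : BruhatLE u w) (d : ℕ) :
    ∀ i j : Fin n, (j : ℕ) - i ≤ d → i < j → u j < u i →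
    Relation.TransGen (fun a b : Fin n => (a, b) ∈ Etilde w u) (u i) (u j) := by
  induction d with
  | zero => intro i j h1 h2; exfalso; omega
  | succ d ih =>
    intro i j h1 h2 h3
    by_cases hno : ∀ k, i < k → k < j → u j < u k → ¬ u k < u i
    · exact Relation.TransGen.single (down_edge w u hle i j h2 h3 hno)
    · push Not at hno
      obtain ⟨k, hk1, hk2, hk3, hk4⟩ := hno
      exact (ih i k (by omega) hk1 hk4).trans (ih k j (by omega) hk2 hk3)

lemma etilde_empty {n : ℕ} (w u : Perm (Fin n)) (i j : Fin n) (hij : i < j)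
    (h : (u i, u j) ∈ Eplus w u) (k : Fin n) (h1 : i < k) (h2 : k < j) (h3 : u i < u k)
    (h4 : u k < u j) : False := by
  obtain ⟨⟨⟨i', j', _, e, _, h6⟩, _⟩, h7⟩ := h
  simp only [Prod.mk.injEq, EmbeddingLike.apply_eq_iff_eq] at e
  obtain ⟨rfl, rfl⟩ := e
  exact cover_empty u i j hij h7 h6 k h1 h2 h3 h4

lemma ered_no_path {n : ℕ} (w u : Perm (Fin n)) (a b c : Fin n) (h : (a, b) ∈ Eplus w u)
    (h1 : Relation.TransGen (fun a b : Fin n => (a, b) ∈ Etilde w u) a c)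
    (h2 : Relation.TransGen (fun a b : Fin n => (a, b) ∈ Etilde w u) c b) : False := by
  apply h.1.2
  obtain ⟨d, hd, hr⟩ := Relation.TransGen.head'_iff.1 h1
  exact ⟨d, hd, Relation.TransGen.trans_right hr h2⟩

lemma local_cross {n : ℕ} (w u : Perm (Fin n)) (hle : BruhatLE u w) (p q x y : Fin n)
    (hpq : p < q) (hxy : x < y) (e1 : (u p, u q) ∈ Eplus w u) (e2 : (u x, u y) ∈ Eplus w u)
    (h1 : p < x) (h2 : u x < u p) (hqx : ¬ (q < x ∧ u x < u q)) (hpy : ¬ (p < y ∧ u y < u p))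
    (hqy : ¬ (q < y ∧ u y < u q)) : False := by
  have v1 : u p < u q := e1.2
  have v2 : u x < u y := e2.2
  have hinj : ∀ a b, a ≠ b → u a ≠ u b := fun a b h e => h (u.injective e)
  have hxq : x < q := by
    rcases lt_trichotomy x q with h | h | h
    · exact h
    · subst h; exact absurd (h2.trans v1) (lt_irrefl _)
    · exact absurd ⟨h, h2.trans v1⟩ hqx
  have hpy' : p < y := h1.trans hxy
  have vpy : u p < u y := lt_of_le_of_ne (not_lt.1 fun h => hpy ⟨hpy', h⟩) (hinj _ _ hpy'.ne)
  have dpx := down_path w u hle _ p x le_rfl h1 h2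
  have txy : Relation.TransGen (fun a b : Fin n => (a, b) ∈ Etilde w u) (u x) (u y) :=
    Relation.TransGen.single e2.1.1
  rcases lt_trichotomy y q with h | h | h
  · have : u q < u y := by
      refine lt_of_le_of_ne (not_lt.1 fun hh => ?_) (hinj _ _ h.ne')
      exact etilde_empty w u p q hpq e1 y hpy' h vpy hh
    exact ered_no_path w u _ _ (u x) e1 dpx
      (txy.trans (down_path w u hle _ y q le_rfl h this))
  · subst h
    exact ered_no_path w u _ _ (u x) e1 dpx txy
  · have : u q < u y := lt_of_le_of_ne (not_lt.1 fun hh => hqy ⟨h, hh⟩) (hinj _ _ h.ne)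
    exact etilde_empty w u x y hxy e2 q hxq h (h2.trans v1) this

lemma asc_mono {n : ℕ} (w u : Perm (Fin n)) (r : ℕ) (I : Fin (r + 1) → Fin n)
    (hIe : ∀ k : Fin r, ((u (I k.castSucc), u (I k.succ)) : Fin n × Fin n) ∈ Eplus w u) :
    StrictMono (fun k => u (I k)) :=
  Fin.strictMono_iff_lt_succ.2 fun k => (hIe k).2

lemma main_cross {n : ℕ} (w u : Perm (Fin n)) (hle : BruhatLE u w)
    (r r' : ℕ) (I : Fin (r + 1) → Fin n) (I' : Fin (r' + 1) → Fin n)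
    (hI : StrictMono I) (hI' : StrictMono I')
    (hIe : ∀ k : Fin r, ((u (I k.castSucc), u (I k.succ)) : Fin n × Fin n) ∈ Eplus w u)
    (hI'e : ∀ k : Fin r', ((u (I' k.castSucc), u (I' k.succ)) : Fin n × Fin n) ∈ Eplus w u)
    (a b : Fin (r + 1)) (a' b' : Fin (r' + 1)) (hab : a < b)
    (h1 : I a < I' a') (h2 : u (I' a') < u (I a))
    (h3 : I' b' < I b) (h4 : u (I b) < u (I' b')) : False := by
  classical
  have mI := asc_mono w u r I hIe
  have mI' := asc_mono w u r' I' hI'e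
  have hab' : a' < b' := by
    rw [← mI'.lt_iff_lt]
    exact h2.trans ((mI hab).trans h4)
  let S : Finset (Fin (r + 1) × Fin (r' + 1)) := Finset.univ.filter fun k =>
    k.1 ≤ b ∧ k.2 ≤ b' ∧ I k.1 < I' k.2 ∧ u (I' k.2) < u (I k.1)
  have hS : S.Nonempty := ⟨(a, a'), by simp [S, hab.le, hab'.le, h1, h2]⟩
  obtain ⟨⟨k, k'⟩, hk, hmax⟩ := S.exists_max_image (fun k => (k.1 : ℕ) + (k.2 : ℕ)) hS
  simp only [S, Finset.mem_filter, Finset.mem_univ, true_and] at hk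
  obtain ⟨hkb, hkb', hk1, hk2⟩ := hk
  have hkb1 : k < b := by
    refine lt_of_le_of_ne hkb ?_
    rintro rfl
    have := hI'.monotone hkb'
    exact absurd (h3.trans hk1) (not_lt.2 this)
  have hkb1' : k' < b' := by
    refine lt_of_le_of_ne hkb' ?_
    rintro rfl
    have := mI.monotone hkb
    exact absurd (h4.trans hk2) (not_lt.2 this)
  obtain ⟨k, rfl⟩ : ∃ l : Fin r, k = l.castSucc := ⟨⟨k, by omega⟩, rfl⟩
  obtain ⟨k', rfl⟩ : ∃ l : Fin r', k' = l.castSucc := ⟨⟨k', by omega⟩, rfl⟩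
  have hs : k.succ ≤ b := Fin.castSucc_lt_iff_succ_le.1 hkb1
  have hs' : k'.succ ≤ b' := Fin.castSucc_lt_iff_succ_le.1 hkb1'
  have no : ∀ l l', l ≤ b → l' ≤ b' → (k : ℕ) + (k' : ℕ) < (l : ℕ) + (l' : ℕ) →
      ¬ (I l < I' l' ∧ u (I' l') < u (I l)) := by
    intro l l' q1 q2 q3 q4
    have := hmax (l, l') (by simp [S, q1, q2, q4])
    simp at this
    omega
  refine local_cross w u hle (I k.castSucc) (I k.succ) (I' k'.castSucc) (I' k'.succ)
    (hI (Fin.castSucc_lt_succ)) (hI' (Fin.castSucc_lt_succ)) (hIe k) (hI'e k') hk1 hk2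
    (no _ _ hs hkb' ?_) (no _ _ hkb hs' ?_) (no _ _ hs hs' ?_)
  all_goals simp
  all_goals omega

theorem stmt9 {n : ℕ} (hn : 1 ≤ n) (w u : Equiv.Perm (Fin n)) (hle : BruhatLE u w)
    (r r' : ℕ) (I : Fin (r + 1) → Fin n) (I' : Fin (r' + 1) → Fin n)
    (hI : StrictMono I) (hI' : StrictMono I')
    (hIe : ∀ k : Fin r, ((u (I k.castSucc), u (I k.succ)) : Fin n × Fin n) ∈ Eplus w u)
    (hI'e : ∀ k : Fin r', ((u (I' k.castSucc), u (I' k.succ)) : Fin n × Fin n) ∈ Eplus w u)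
    (hImax1 : ¬ ∃ i0 : Fin n, i0 < I 0 ∧ ((u i0, u (I 0)) : Fin n × Fin n) ∈ Eplus w u)
    (hImax2 : ¬ ∃ i1 : Fin n, I (Fin.last r) < i1 ∧
      ((u (I (Fin.last r)), u i1) : Fin n × Fin n) ∈ Eplus w u)
    (hI'max1 : ¬ ∃ i0 : Fin n, i0 < I' 0 ∧ ((u i0, u (I' 0)) : Fin n × Fin n) ∈ Eplus w u)
    (hI'max2 : ¬ ∃ i1 : Fin n, I' (Fin.last r') < i1 ∧
      ((u (I' (Fin.last r')), u i1) : Fin n × Fin n) ∈ Eplus w u) :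
    (¬ ∃ (k : Fin (r + 1)) (k' : Fin (r' + 1)), I k < I' k' ∧ u (I' k') < u (I k)) ∨
    (¬ ∃ (k' : Fin (r' + 1)) (k : Fin (r + 1)), I' k' < I k ∧ u (I k) < u (I' k')) := by
  by_contra hcon
  push Not at hcon
  obtain ⟨⟨a, a', h1, h2⟩, ⟨b', b, h3, h4⟩⟩ := hcon
  have mI' := asc_mono w u r' I' hI'e
  rcases lt_trichotomy a b with h | h | h
  · exact main_cross w u hle r r' I I' hI hI' hIe hI'e a b a' b' h h1 h2 h3 h4
  · subst h
    have x1 : b' < a' := hI'.lt_iff_lt.1 (h3.trans h1)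
    exact absurd (mI' x1) (not_lt.2 (h2.trans h4).le)
  · have x1 : b' < a' := hI'.lt_iff_lt.1 (h3.trans ((hI h).trans h1))
    exact main_cross w u hle r' r I' I hI' hI hI'e hIe b' a' b a x1 h3 h4 h1 h2
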